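/- arXiv:2110.08671 — 9 statements merged into one kernel-verified Lean document; each statement's English description precedes it below -/
import Mathlib

section
/- Let ε ∈ (0,1], v̄ > 0, s̄ > 0, c_d ∈ ℝ, η > 0, ξ > 0 with ηξ > 1, and fix s ∈ ℝ. Define g(v) = ε·v/v̄ + (1−ε)·s/s̄, F_d(v) = (v + s − c_d − ηξ·v)·g(v), and v*(s) = [(1−ε)(ηξ−1)·v̄·s − ε·s̄·(s − c_d)] / (2ε(1−ηξ)·s̄). Then v*(s) is the unique global maximizer of F_d on ℝ: for every v ≠ v*(s), F_d(v) < F_d(v*(s)). -/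
/-- Under `ηξ > 1`, the paper's game rule value `v*(s)` is the
unique global maximizer of the device's utility integrand `F_d` on ℝ. -/
theorem vstar_unique_global_maximizer
    (ε vb sb cd η ξ s : ℝ)
    (hε : ε ∈ Set.Ioc (0:ℝ) 1) (hvb : 0 < vb) (hsb : 0 < sb)
    (hη : 0 < η) (hξ : 0 < ξ) (hηξ : 1 < η * ξ)
    (g Fd : ℝ → ℝ) (vstar : ℝ)
    (hg : ∀ v, g v = ε * v / vb + (1 - ε) * s / sb)
    (hFd : ∀ v, Fd v = (v + s - cd - η * ξ * v) * g v)
    (hvstar : vstar = ((1 - ε) * (η * ξ - 1) * vb * s - ε * sb * (s - cd)) /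
      (2 * ε * (1 - η * ξ) * sb)) :
    ∀ v : ℝ, v ≠ vstar → Fd v < Fd vstar := by
  intro v hv
  have hε0 : 0 < ε := hε.1
  have hk : 1 - η * ξ ≠ 0 := by linarith
  have hD : 2 * ε * (1 - η * ξ) * sb ≠ 0 :=
    mul_ne_zero (mul_ne_zero (by positivity) hk) hsb.ne'
  have h := (eq_div_iff hD).1 hvstar
  have key : Fd vstar - Fd v = (η * ξ - 1) * ε / vb * (v - vstar) ^ 2 := by
    rw [hFd, hFd, hg, hg]
    field_simp
    linear_combination (vstar - v) * h
  have h1 : 0 < (v - vstar) ^ 2 := by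
    have := sub_ne_zero.2 hv
    positivity
  have h2 : 0 < η * ξ - 1 := by linarith
  have : 0 < (η * ξ - 1) * ε / vb * (v - vstar) ^ 2 := by positivity
  linarith
end

section
/- Let ε ∈ (0,1], v̄ > 0, s̄ > 0, c_d ∈ ℝ, η > 0, ξ > 0 with ηξ > 1, fix s ∈ ℝ and T ≥ 0. Define g(v) = ε·v/v̄ + (1−ε)·s/s̄, F_d(v) = (v + s − c_d − ηξ·v)·g(v), and v*(s) = [(1−ε)(ηξ−1)·v̄·s − ε·s̄·(s − c_d)] / (2ε(1−ηξ)·s̄). Then for every function v : ℝ → ℝ such that t ↦ F_d(v(t)) is integrable on [0,T], the device's expected utility satisfies ∫₀ᵀ F_d(v(t)) dt ≤ T · F_d(v*(s)); i.e., the constant strategy v ≡ v*(s) maximizes U_d = ∫₀ᵀ F_d(v(t)) dt. -/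
open intervalIntegral MeasureTheory

/-- Under `ηξ > 1`, the constant strategy `v ≡ v*(s)` maximizes
the device's expected utility `U_d = ∫₀ᵀ F_d(v(t)) dt` over all strategies
`v : ℝ → ℝ` with integrable payoff. -/
theorem constant_vstar_maximizes_Ud
    (ε vb sb cd η ξ s T : ℝ)
    (hε : ε ∈ Set.Ioc (0:ℝ) 1) (hvb : 0 < vb) (hsb : 0 < sb)
    (hη : 0 < η) (hξ : 0 < ξ) (hηξ : 1 < η * ξ) (hT : 0 ≤ T)
    (g Fd : ℝ → ℝ) (vstar : ℝ)
    (hg : ∀ v, g v = ε * v / vb + (1 - ε) * s / sb)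
    (hFd : ∀ v, Fd v = (v + s - cd - η * ξ * v) * g v)
    (hvstar : vstar = ((1 - ε) * (η * ξ - 1) * vb * s - ε * sb * (s - cd)) /
      (2 * ε * (1 - η * ξ) * sb)) :
    ∀ v : ℝ → ℝ, IntegrableOn (fun t => Fd (v t)) (Set.Icc 0 T) →
      ∫ t in (0:ℝ)..T, Fd (v t) ≤ T * Fd vstar := by
  intro v hv
  obtain ⟨hε0, hε1⟩ := hε
  have hk : 1 - η * ξ ≠ 0 := by linarith
  have hD : 2 * ε * (1 - η * ξ) * sb ≠ 0 := by
    have := hε0.ne'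
    have := hsb.ne'
    positivity
  rw [eq_div_iff hD] at hvstar
  have key : ∀ x, Fd x ≤ Fd vstar := by
    intro x
    have e : Fd vstar - Fd x = (η * ξ - 1) * ε / vb * (x - vstar) ^ 2 := by
      rw [hFd, hFd, hg, hg]
      field_simp
      linear_combination (vstar - x) * hvstar
    have h1 : 0 ≤ (η * ξ - 1) * ε / vb * (x - vstar) ^ 2 := by
      have : 0 < η * ξ - 1 := by linarith
      positivity
    linarith
  have hi : IntervalIntegrable (fun t => Fd (v t)) volume 0 T :=
    (intervalIntegrable_iff_integrableOn_Icc_of_le hT).2 hv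
  calc ∫ t in (0:ℝ)..T, Fd (v t) ≤ ∫ t in (0:ℝ)..T, Fd vstar :=
        intervalIntegral.integral_mono_on hT hi intervalIntegrable_const (fun t _ => key (v t))
    _ = T * Fd vstar := by simp
end

section
/- Let ε ∈ (0,1), v̄ > 0, s̄ > 0, c_d ∈ ℝ, η > 0, ξ > 0 with ηξ > 1, R ∈ ℝ, α_s ≥ 0, β_s ≥ 0, θ ∈ [0,1]. Define v*(s) = [(1−ε)(ηξ−1)·v̄·s − ε·s̄·(s − c_d)] / (2ε(1−ηξ)·s̄), g(v,s) = ε·v/v̄ + (1−ε)·s/s̄, F_s(s) = (R + α_s·θ + β_s − v*(s) − s)·g(v*(s), s), A₀ = ε/v̄ + (ηξ−1)(ε−1)/s̄, A₁ = 2(ηξ−1), and assume v̄·A₀/(ε·A₁) + 1 > 0. Then the unique global maximizer of F_s on ℝ is s* = (R + α_s·θ + β_s + c_d/A₁) / (2·(v̄·A₀/(ε·A₁) + 1)) + c_d·ε / (2·v̄·A₁·(A₀/A₁ − (ε−1)/s̄)); i.e., for every s ≠ s*, F_s(s) < F_s(s*). -/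
/-- Given the device's game rule `v*(s)`, the paper's `s*` is the
unique global maximizer of the server's utility integrand `F_s` on ℝ. -/
theorem sstar_unique_global_maximizer
    (ε vb sb cd η ξ R αs βs θ : ℝ)
    (hε : ε ∈ Set.Ioo (0:ℝ) 1) (hvb : 0 < vb) (hsb : 0 < sb)
    (hη : 0 < η) (hξ : 0 < ξ) (hηξ : 1 < η * ξ)
    (hαs : 0 ≤ αs) (hβs : 0 ≤ βs) (hθ : θ ∈ Set.Icc (0:ℝ) 1)
    (vstar : ℝ → ℝ) (g : ℝ → ℝ → ℝ) (Fs : ℝ → ℝ) (A0 A1 sstar : ℝ)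
    (hvstar : ∀ s, vstar s = ((1 - ε) * (η * ξ - 1) * vb * s - ε * sb * (s - cd)) /
      (2 * ε * (1 - η * ξ) * sb))
    (hg : ∀ v s, g v s = ε * v / vb + (1 - ε) * s / sb)
    (hFs : ∀ s, Fs s = (R + αs * θ + βs - vstar s - s) * g (vstar s) s)
    (hA0 : A0 = ε / vb + (η * ξ - 1) * (ε - 1) / sb)
    (hA1 : A1 = 2 * (η * ξ - 1))
    (hpos : vb * A0 / (ε * A1) + 1 > 0)
    (hsstar : sstar = (R + αs * θ + βs + cd / A1) / (2 * (vb * A0 / (ε * A1) + 1))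
      + cd * ε / (2 * vb * A1 * (A0 / A1 - (ε - 1) / sb))) :
    ∀ s : ℝ, s ≠ sstar → Fs s < Fs sstar := by
  obtain ⟨hε0, hε1⟩ := hε
  have hk : 0 < η * ξ - 1 := by linarith
  have hA1p : 0 < A1 := by rw [hA1]; linarith
  have hv : ∀ s, vstar s = vb * A0 / (ε * A1) * s - cd / A1 := by
    intro s
    have hk' : 1 - η * ξ = -(η * ξ - 1) := by ring
    rw [hvstar, hA0, hA1, hk']
    generalize η * ξ - 1 = k at hk
    field_simp
    ring
  have hQ : 0 < A0 / A1 - (ε - 1) / sb := by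
    have h : A0 / A1 - (ε - 1) / sb
        = ε / (2 * (η * ξ - 1) * vb) + (1 - ε) / (2 * sb) := by
      rw [hA0, hA1]
      generalize η * ξ - 1 = k at hk
      field_simp
      ring
    have h1 : 0 < 1 - ε := by linarith
    rw [h]
    positivity
  have hG : ∀ s, g (vstar s) s = (A0 / A1 - (ε - 1) / sb) * s - cd * ε / (vb * A1) := by
    intro s
    rw [hg, hv]
    field_simp
    ring
  have hF : ∀ s, Fs s = (R + αs * θ + βs + cd / A1 - (vb * A0 / (ε * A1) + 1) * s) *
      ((A0 / A1 - (ε - 1) / sb) * s - cd * ε / (vb * A1)) := by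
    intro s
    rw [hFs, hG, hv]
    ring
  have hE : cd * ε / (2 * vb * A1 * (A0 / A1 - (ε - 1) / sb))
      = cd * ε / (vb * A1) / (2 * (A0 / A1 - (ε - 1) / sb)) := by
    rw [div_div]
    congr 1
    ring
  rw [hE] at hsstar
  intro s hs
  rw [hF, hF]
  generalize vb * A0 / (ε * A1) + 1 = P at *
  generalize A0 / A1 - (ε - 1) / sb = Q at *
  generalize R + αs * θ + βs + cd / A1 = C at *
  generalize cd * ε / (vb * A1) = E at *
  have hP : 0 < P := hpos
  have hkey : 2 * P * Q * sstar = C * Q + E * P := by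
    rw [hsstar]
    field_simp
  have hsq : 0 < (s - sstar) ^ 2 := by
    have := sub_ne_zero.mpr hs
    positivity
  have hm : 0 < P * Q * (s - sstar) ^ 2 := by positivity
  have hid : (C - P * sstar) * (Q * sstar - E) - (C - P * s) * (Q * s - E)
      = P * Q * (s - sstar) ^ 2 := by
    linear_combination (s - sstar) * hkey
  linarith
end

section
/- Let ε ∈ (0,1), v̄ > 0, s̄ > 0, c_d ∈ ℝ, η > 0, ξ > 0 with ηξ > 1, R ∈ ℝ, α_s ≥ 0, β_s ≥ 0, θ ∈ [0,1], and T ≥ 0. Define v*(s), g(v,s), F_s(s), A₀, A₁ and s* as follows: v*(s) = [(1−ε)(ηξ−1)·v̄·s − ε·s̄·(s − c_d)] / (2ε(1−ηξ)·s̄), g(v,s) = ε·v/v̄ + (1−ε)·s/s̄, F_s(s) = (R + α_s·θ + β_s − v*(s) − s)·g(v*(s), s), A₀ = ε/v̄ + (ηξ−1)(ε−1)/s̄, A₁ = 2(ηξ−1), s* = (R + α_s·θ + β_s + c_d/A₁) / (2·(v̄·A₀/(ε·A₁) + 1)) + c_d·ε / (2·v̄·A₁·(A₀/A₁ − (ε−1)/s̄)),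 and assume v̄·A₀/(ε·A₁) + 1 > 0. Then for every function s : ℝ → ℝ such that t ↦ F_s(s(t)) is integrable on [0,T], the server's expected utility satisfies ∫₀ᵀ F_s(s(t)) dt ≤ T · F_s(s*). -/
open intervalIntegral MeasureTheory

/-- The constant strategy `s ≡ s*` maximizes the server's expected
utility `U_s = ∫₀ᵀ F_s(s(t)) dt` over all strategies with integrable payoff. -/
theorem constant_sstar_maximizes_Us
    (ε vb sb cd η ξ R αs βs θ T : ℝ)
    (hε : ε ∈ Set.Ioo (0:ℝ) 1) (hvb : 0 < vb) (hsb : 0 < sb)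
    (hη : 0 < η) (hξ : 0 < ξ) (hηξ : 1 < η * ξ)
    (hαs : 0 ≤ αs) (hβs : 0 ≤ βs) (hθ : θ ∈ Set.Icc (0:ℝ) 1) (hT : 0 ≤ T)
    (vstar : ℝ → ℝ) (g : ℝ → ℝ → ℝ) (Fs : ℝ → ℝ) (A0 A1 sstar : ℝ)
    (hvstar : ∀ s, vstar s = ((1 - ε) * (η * ξ - 1) * vb * s - ε * sb * (s - cd)) /
      (2 * ε * (1 - η * ξ) * sb))
    (hg : ∀ v s, g v s = ε * v / vb + (1 - ε) * s / sb)
    (hFs : ∀ s, Fs s = (R + αs * θ + βs - vstar s - s) * g (vstar s) s)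
    (hA0 : A0 = ε / vb + (η * ξ - 1) * (ε - 1) / sb)
    (hA1 : A1 = 2 * (η * ξ - 1))
    (hpos : vb * A0 / (ε * A1) + 1 > 0)
    (hsstar : sstar = (R + αs * θ + βs + cd / A1) / (2 * (vb * A0 / (ε * A1) + 1))
      + cd * ε / (2 * vb * A1 * (A0 / A1 - (ε - 1) / sb))) :
    ∀ sfun : ℝ → ℝ, IntegrableOn (fun t => Fs (sfun t)) (Set.Icc 0 T) →
      ∫ t in (0:ℝ)..T, Fs (sfun t) ≤ T * Fs sstar := by
  intro sfun hint
  obtain ⟨hε0, hε1⟩ := hε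
  have hk : 0 < η * ξ - 1 := by linarith
  have hk' : 1 - η * ξ ≠ 0 := by linarith
  have hA1pos : 0 < A1 := by rw [hA1]; linarith
  obtain ⟨a, ha⟩ : ∃ a, a = vb * A0 / (ε * A1) := ⟨_, rfl⟩
  obtain ⟨b, hb⟩ : ∃ b, b = A0 / A1 - (ε - 1) / sb := ⟨_, rfl⟩
  obtain ⟨k, hkd⟩ : ∃ k, k = η * ξ - 1 := ⟨_, rfl⟩
  have hkn : 1 - η * ξ = -k := by rw [hkd]; ring
  rw [← hkd] at hk hA0 hA1
  have hk0 : k ≠ 0 := hk.ne'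
  have hbpos : 0 < b := by
    have h : b = ε / (vb * (2 * k)) + (1 - ε) / (2 * sb) := by
      rw [hb, hA0, hA1]; field_simp; ring
    have h1 : 0 < 1 - ε := by linarith
    rw [h]; positivity
  have hv : ∀ s, vstar s = a * s - cd / A1 := by
    intro s
    rw [hvstar, hkn, ← hkd, ha, hA0, hA1]; field_simp; ring
  have hgs : ∀ s, g (vstar s) s = b * s - ε * cd / (vb * A1) := by
    intro s
    rw [hg, hv, ha, hb]; field_simp; ring
  rw [← ha] at hpos hsstar
  rw [← hb] at hsstar
  have key : ∀ s, Fs sstar - Fs s = (a + 1) * b * (s - sstar) ^ 2 := by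
    intro s
    have ha1 : a + 1 ≠ 0 := ne_of_gt hpos
    have h2 : 2 * (a + 1) * b * sstar =
        (R + αs * θ + βs + cd / A1) * b + (a + 1) * (ε * cd / (vb * A1)) := by
      rw [hsstar]; field_simp
    rw [hFs, hFs, hgs, hgs, hv, hv]
    linear_combination (s - sstar) * h2
  have hle : ∀ s, Fs s ≤ Fs sstar := by
    intro s
    have h1 : 0 ≤ (a + 1) * b * (s - sstar) ^ 2 := by
      have := hpos.le
      positivity
    linarith [key s]
  have hI : IntervalIntegrable (fun t => Fs (sfun t)) volume 0 T :=
    (intervalIntegrable_iff_integrableOn_Icc_of_le hT).2 hint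
  calc ∫ t in (0:ℝ)..T, Fs (sfun t) ≤ ∫ t in (0:ℝ)..T, Fs sstar :=
        intervalIntegral.integral_mono hT hI intervalIntegrable_const (fun t => hle _)
    _ = T * Fs sstar := by simp
end

section
/- (Theorem 1: the game rule v*(s) is incentive-compatible.) Let ε ∈ (0,1), v̄ > 0, s̄ > 0, c_d ∈ ℝ, η > 0, ξ > 0 with ηξ > 1, R ∈ ℝ, α_s > 0, β_s ≥ 0. Define v*(s) = [(1−ε)(ηξ−1)·v̄·s − ε·s̄·(s − c_d)] / (2ε(1−ηξ)·s̄), g(v,s) = ε·v/v̄ + (1−ε)·s/s̄, A₀ = ε/v̄ + (ηξ−1)(ε−1)/s̄, A₁ = 2(ηξ−1), assume v̄·A₀/(ε·A₁) + 1 > 0, and for each τ ∈ ℝ define s*(τ) = (R + α_s·τ + β_s + c_d/A₁) / (2·(v̄·A₀/(ε·A₁) + 1)) + c_d·ε / (2·v̄·A₁·(A₀/A₁ − (ε−1)/s̄)) and, for the true leakage degree θ, F_s(s; θ) = (R + α_s·θ + β_s − v*(s) − s)·g(v*(s), s). Then for every θ ∈ [0,1] and every θ̂ ∈ [0,1] with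 θ̂ ≠ θ, the server's utility from responding according to the fake private information θ̂ is strictly lower than from responding truthfully: F_s(s*(θ̂); θ) < F_s(s*(θ); θ). -/
/-- Theorem 1 of the paper: the game rule `v*(s)` is
incentive-compatible: responding according to a fake leakage degree `θ̂ ≠ θ`
yields strictly lower utility than responding truthfully. -/
theorem game_rule_incentive_compatible
    (ε vb sb cd η ξ R αs βs : ℝ)
    (hε : ε ∈ Set.Ioo (0:ℝ) 1) (hvb : 0 < vb) (hsb : 0 < sb)
    (hη : 0 < η) (hξ : 0 < ξ) (hηξ : 1 < η * ξ)
    (hαs : 0 < αs) (hβs : 0 ≤ βs)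
    (vstar : ℝ → ℝ) (g : ℝ → ℝ → ℝ) (A0 A1 : ℝ) (sstar : ℝ → ℝ) (Fs : ℝ → ℝ → ℝ)
    (hvstar : ∀ s, vstar s = ((1 - ε) * (η * ξ - 1) * vb * s - ε * sb * (s - cd)) /
      (2 * ε * (1 - η * ξ) * sb))
    (hg : ∀ v s, g v s = ε * v / vb + (1 - ε) * s / sb)
    (hA0 : A0 = ε / vb + (η * ξ - 1) * (ε - 1) / sb)
    (hA1 : A1 = 2 * (η * ξ - 1))
    (hpos : vb * A0 / (ε * A1) + 1 > 0)
    (hsstar : ∀ τ, sstar τ = (R + αs * τ + βs + cd / A1) / (2 * (vb * A0 / (ε * A1) + 1))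
      + cd * ε / (2 * vb * A1 * (A0 / A1 - (ε - 1) / sb)))
    (hFs : ∀ s θ, Fs s θ = (R + αs * θ + βs - vstar s - s) * g (vstar s) s) :
    ∀ θ ∈ Set.Icc (0:ℝ) 1, ∀ θhat ∈ Set.Icc (0:ℝ) 1, θhat ≠ θ →
      Fs (sstar θhat) θ < Fs (sstar θ) θ := by
  intro θ _ θhat _ hne
  obtain ⟨hε0, hε1⟩ := hε
  have hk : 0 < η * ξ - 1 := by linarith
  generalize hkk : η * ξ - 1 = k at *
  have hk' : 1 - η * ξ = -k := by linarith
  have hA1p : 0 < A1 := by rw [hA1]; linarith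
  obtain ⟨P, hP⟩ : ∃ P, P = vb * A0 / (ε * A1) := ⟨_, rfl⟩
  obtain ⟨Q, hQ⟩ : ∃ Q, Q = A0 / A1 - (ε - 1) / sb := ⟨_, rfl⟩
  have hQpos : 0 < Q := by
    have h1 : Q = ε / (2 * k * vb) + (1 - ε) / (2 * sb) := by
      rw [hQ, hA0, hA1]; field_simp; ring
    have h2 : 0 < 1 - ε := by linarith
    rw [h1]; positivity
  have hv : ∀ s, vstar s = P * s - cd / A1 := by
    intro s
    rw [hvstar, hP, hA0, hA1, hk']
    field_simp
    ring
  have hgs : ∀ s, g (vstar s) s = Q * s - ε * cd / (vb * A1) := by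
    intro s
    rw [hg, hv, hP, hQ]
    field_simp
    ring
  rw [← hP] at hpos
  have hP1 : P + 1 ≠ 0 := ne_of_gt hpos
  have hQ0 : Q ≠ 0 := ne_of_gt hQpos
  have key : Fs (sstar θ) θ - Fs (sstar θhat) θ
      = (P + 1) * Q * (αs * (θhat - θ) / (2 * (P + 1))) ^ 2 := by
    rw [hFs, hFs, hgs, hgs, hv, hv, hsstar, hsstar, ← hP, ← hQ]
    clear hP hQ
    field_simp
    ring
  have hd : θhat - θ ≠ 0 := sub_ne_zero.mpr hne
  have : 0 < (P + 1) * Q * (αs * (θhat - θ) / (2 * (P + 1))) ^ 2 := by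
    have : αs * (θhat - θ) / (2 * (P + 1)) ≠ 0 :=
      div_ne_zero (mul_ne_zero hαs.ne' hd) (mul_ne_zero two_ne_zero hP1)
    have := mul_pos hpos hQpos
    positivity
  linarith
end

section
/- (Press–Dyson orthogonality for the leader–requestor repeated game.) Let p : Fin 4 → ℝ and q : Fin 2 → ℝ, and define the 4×4 real matrix M by M i 0 = p i · q 0, M i 1 = p i · (1 − q 0), M i 2 = (1 − p i) · q 1, M i 3 = (1 − p i) · (1 − q 1). Define p̃ : Fin 4 → ℝ by p̃ = (p 0 − 1, p 1 − 1, p 2, p 3). If v : Fin 4 → ℝ satisfies the stationarity condition ∑ᵢ v i · M i j = v j for every j ∈ Fin 4 (i.e., vᵀM = vᵀ), then ∑ᵢ v i · p̃ i = 0. -/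
/-- Press–Dyson orthogonality: any stationary vector `v` of the
Markov matrix `M` induced by the strategies `p`, `q` is orthogonal to the ZD
vector `p̃ = (p₀ - 1, p₁ - 1, p₂, p₃)`. -/
theorem press_dyson_orthogonality
    (p : Fin 4 → ℝ) (q : Fin 2 → ℝ) (M : Fin 4 → Fin 4 → ℝ) (v : Fin 4 → ℝ)
    (hM0 : ∀ i, M i 0 = p i * q 0)
    (hM1 : ∀ i, M i 1 = p i * (1 - q 0))
    (hM2 : ∀ i, M i 2 = (1 - p i) * q 1)
    (hM3 : ∀ i, M i 3 = (1 - p i) * (1 - q 1))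
    (hstat : ∀ j, ∑ i, v i * M i j = v j) :
    ∑ i, v i * (![p 0 - 1, p 1 - 1, p 2, p 3] i) = 0 := by
  have h0 := hstat 0
  have h1 := hstat 1
  simp only [Fin.sum_univ_four, hM0] at h0
  simp only [Fin.sum_univ_four, hM1] at h1
  simp [Fin.sum_univ_four]
  linear_combination h0 + h1
end

section
/- (ZD linear payoff relation.) Let p : Fin 4 → ℝ, q : Fin 2 → ℝ, and let M be the 4×4 matrix with M i 0 = p i · q 0, M i 1 = p i · (1 − q 0), M i 2 = (1 − p i) · q 1, M i 3 = (1 − p i) · (1 − q 1); let p̃ = (p 0 − 1, p 1 − 1, p 2, p 3). Let v : Fin 4 → ℝ satisfy ∑ᵢ v i · M i j = v j for every j and ∑ᵢ v i = 1, and let x, y : Fin 4 → ℝ be the payoff vectors with expected payoffs E_b = ∑ᵢ v i · x i and E_r = ∑ᵢ v i · y i. If there exist α, β, γ ∈ ℝ such that p̃ i = α·x i + β·y i + γ for every i ∈ Fin 4, then α·E_b + β·E_r + γ = 0. -/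
/-- ZD linear payoff relation: if the leader's ZD vector `p̃`
is a linear combination `α·x + β·y + γ·1` of the payoff vectors, then the
expected payoffs satisfy `α·E_b + β·E_r + γ = 0`. -/
theorem zd_linear_payoff_relation
    (p : Fin 4 → ℝ) (q : Fin 2 → ℝ) (M : Fin 4 → Fin 4 → ℝ) (v x y : Fin 4 → ℝ)
    (α β γ : ℝ)
    (hM0 : ∀ i, M i 0 = p i * q 0)
    (hM1 : ∀ i, M i 1 = p i * (1 - q 0))
    (hM2 : ∀ i, M i 2 = (1 - p i) * q 1)
    (hM3 : ∀ i, M i 3 = (1 - p i) * (1 - q 1))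
    (hstat : ∀ j, ∑ i, v i * M i j = v j)
    (hsum : ∑ i, v i = 1)
    (hzd : ∀ i, (![p 0 - 1, p 1 - 1, p 2, p 3] : Fin 4 → ℝ) i = α * x i + β * y i + γ) :
    α * (∑ i, v i * x i) + β * (∑ i, v i * y i) + γ = 0 := by
  have h0 := hstat 0
  have h1 := hstat 1
  have z0 := hzd 0
  have z1 := hzd 1
  have z2 := hzd 2
  have z3 := hzd 3
  simp only [hM0, hM1, Fin.sum_univ_four] at h0 h1 hsum ⊢
  simp at z0 z1 z2 z3
  linear_combination h0 + h1 - v 0 * z0 - v 1 * z1 - v 2 * z2 - v 3 * z3 - γ * hsum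
end

section
/- (Cooperation-enforcing linear relation.) Let p : Fin 4 → ℝ, q : Fin 2 → ℝ, and let M be the 4×4 matrix with M i 0 = p i · q 0, M i 1 = p i · (1 − q 0), M i 2 = (1 − p i) · q 1, M i 3 = (1 − p i) · (1 − q 1); let p̃ = (p 0 − 1, p 1 − 1, p 2, p 3). Let v : Fin 4 → ℝ satisfy ∑ᵢ v i · M i j = v j for every j and ∑ᵢ v i = 1, and let x, y : Fin 4 → ℝ with E_b = ∑ᵢ v i · x i and E_r = ∑ᵢ v i · y i. If there exist γ ≠ 0 and χ ∈ ℝ such that p̃ i = γ·((x i − x 0) − χ·(y i − y 0)) for every i ∈ Fin 4, then E_b − x 0 = χ·(E_r − y 0). -/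
/-- cooperation-enforcing linear relation: if the leader sets
`p̃ = γ((x − x₀·1) − χ(y − y₀·1))` with `γ ≠ 0`, then the expected payoffs
satisfy `E_b − x₀ = χ·(E_r − y₀)`. -/
theorem cooperation_enforcing_linear_relation
    (p : Fin 4 → ℝ) (q : Fin 2 → ℝ) (M : Fin 4 → Fin 4 → ℝ) (v x y : Fin 4 → ℝ)
    (γ χ : ℝ) (hγ : γ ≠ 0)
    (hM0 : ∀ i, M i 0 = p i * q 0)
    (hM1 : ∀ i, M i 1 = p i * (1 - q 0))
    (hM2 : ∀ i, M i 2 = (1 - p i) * q 1)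
    (hM3 : ∀ i, M i 3 = (1 - p i) * (1 - q 1))
    (hstat : ∀ j, ∑ i, v i * M i j = v j)
    (hsum : ∑ i, v i = 1)
    (hzd : ∀ i, (![p 0 - 1, p 1 - 1, p 2, p 3] : Fin 4 → ℝ) i =
      γ * ((x i - x 0) - χ * (y i - y 0))) :
    (∑ i, v i * x i) - x 0 = χ * ((∑ i, v i * y i) - y 0) := by
  have s0 := hstat 0
  have s1 := hstat 1
  have z0 := hzd 0
  have z1 := hzd 1
  have z2 := hzd 2
  have z3 := hzd 3
  simp only [Fin.sum_univ_four, hM0, hM1] at s0 s1 hsum ⊢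
  simp only [Matrix.cons_val] at z0 z1 z2 z3
  apply sub_eq_zero.mp
  apply (mul_eq_zero.mp _).resolve_left hγ
  linear_combination s0 + s1 - v 0 * z0 - v 1 * z1 - v 2 * z2 - v 3 * z3
    + γ * (x 0 - χ * y 0) * hsum
end

section
/- (Theorem 2: the ZD cooperation-enforcing strategy makes mutual cooperation the stable state.) Let p : Fin 4 → ℝ, q : Fin 2 → ℝ, and let M be the 4×4 matrix with M i 0 = p i · q 0, M i 1 = p i · (1 − q 0), M i 2 = (1 − p i) · q 1, M i 3 = (1 − p i) · (1 − q 1); let p̃ = (p 0 − 1, p 1 − 1, p 2, p 3). Let v : Fin 4 → ℝ satisfy v i ≥ 0 for all i, ∑ᵢ v i = 1, and ∑ᵢ v i · M i j = v j for every j. Let x, y : Fin 4 → ℝ satisfy the payoff orderings x 2 > x 0 > x 3 > x 1 and y 1 > y 0 > y 3 > y 2, and the welfare condition x i + y i < x 0 + y 0 for every i ≠ 0. Suppose the leader adopts the ZD strategy: there exist γ ≠ 0 and χ ≥ 1 with p̃ i = γ·((x i − x 0) − χ·(y i − y 0)) for every i ∈ Fin 4. Then the expected payoffs E_b = ∑ᵢ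 v i · x i and E_r = ∑ᵢ v i · y i satisfy E_r ≤ y 0 and E_b ≤ x 0; that is, the highest expected payoff the requestor can obtain is the mutual-cooperation payoff y₀, achieved together with E_b = x₀. -/
/-- Theorem 2 of the paper: under the leader's ZD
cooperation-enforcing strategy `p̃ = γ((x − x₀·1) − χ(y − y₀·1))` with `γ ≠ 0`
and `χ ≥ 1`, the long-term expected payoffs satisfy `E_r ≤ y₀` and `E_b ≤ x₀`:
mutual cooperation is the stable state. -/
theorem zd_enforces_mutual_cooperation
    (p : Fin 4 → ℝ) (q : Fin 2 → ℝ) (M : Fin 4 → Fin 4 → ℝ) (v x y : Fin 4 → ℝ)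
    (γ χ : ℝ) (hγ : γ ≠ 0) (hχ : 1 ≤ χ)
    (hM0 : ∀ i, M i 0 = p i * q 0)
    (hM1 : ∀ i, M i 1 = p i * (1 - q 0))
    (hM2 : ∀ i, M i 2 = (1 - p i) * q 1)
    (hM3 : ∀ i, M i 3 = (1 - p i) * (1 - q 1))
    (hv : ∀ i, 0 ≤ v i) (hsum : ∑ i, v i = 1)
    (hstat : ∀ j, ∑ i, v i * M i j = v j)
    (hx : x 2 > x 0 ∧ x 0 > x 3 ∧ x 3 > x 1)
    (hy : y 1 > y 0 ∧ y 0 > y 3 ∧ y 3 > y 2)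
    (hw : ∀ i, i ≠ 0 → x i + y i < x 0 + y 0)
    (hzd : ∀ i, (![p 0 - 1, p 1 - 1, p 2, p 3] : Fin 4 → ℝ) i =
      γ * ((x i - x 0) - χ * (y i - y 0))) :
    (∑ i, v i * y i) ≤ y 0 ∧ (∑ i, v i * x i) ≤ x 0 := by
  have s0 := hstat 0
  have s1 := hstat 1
  have z0 := hzd 0
  have z1 := hzd 1
  have z2 := hzd 2
  have z3 := hzd 3
  have w1 := mul_nonneg (hv 1) (sub_nonneg.2 (hw 1 (by decide)).le)
  have w2 := mul_nonneg (hv 2) (sub_nonneg.2 (hw 2 (by decide)).le)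
  have w3 := mul_nonneg (hv 3) (sub_nonneg.2 (hw 3 (by decide)).le)
  simp only [Fin.sum_univ_four, hM0, hM1] at s0 s1 hsum ⊢
  simp at z0 z1 z2 z3
  -- deviations of the expected payoffs from mutual cooperation
  obtain ⟨Y, hY⟩ : ∃ Y, Y = v 1 * (y 1 - y 0) + v 2 * (y 2 - y 0) + v 3 * (y 3 - y 0) := ⟨_, rfl⟩
  obtain ⟨X, hX⟩ : ∃ X, X = v 1 * (x 1 - x 0) + v 2 * (x 2 - x 0) + v 3 * (x 3 - x 0) := ⟨_, rfl⟩
  have hp0 : p 0 - 1 = 0 := by linarith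
  have key : γ * (X - χ * Y) = 0 := by
    have h1 : v 0 * (p 0 - 1) + v 1 * (p 1 - 1) + v 2 * p 2 + v 3 * p 3 = 0 := by
      linear_combination s0 + s1
    rw [hp0, z1, z2, z3] at h1
    rw [hX, hY]
    linear_combination h1
  have hXY : X - χ * Y = 0 := (mul_eq_zero.1 key).resolve_left hγ
  have hs : X + Y ≤ 0 := by rw [hX, hY]; linarith
  have hYle : Y ≤ 0 := by
    by_contra h
    push Not at h
    nlinarith
  have hXle : X ≤ 0 := by nlinarith
  have hv0 : v 0 = 1 - v 1 - v 2 - v 3 := by linarith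
  rw [hv0]
  constructor
  · rw [hY] at hYle; linarith
  · rw [hX] at hXle; linarith
end
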